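/- Let C ≥ 2 and p ≥ 1 be integers and γ > 0. Suppose w_1,…,w_C ∈ ℝ^p satisfy ‖w_c‖₂ = 1 for all c ∈ [C] and ⟨w_i, w_j⟩ = −1/(C−1) for all i ≠ j (i.e., the prototypes form a simplex equiangular tight frame). Let h ∈ ℝ^p with ‖h‖₂ = 1 and let y ∈ [C]. If −⟨w_y, h⟩ + γ·Σ_{j≠y} ⟨w_j, h⟩ < −(1+γ)·√((C−2)/(2(C−1))), then ⟨w_y, h⟩ > ⟨w_i, h⟩ for every i ≠ y; that is, a sample whose unhinged loss is below the threshold −(1+γ)·√((C−2)/(2(C−1))) is correctly classified by the rule argmax_c ⟨w_c, h⟩. -/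

import Mathlib

open scoped BigOperators
open RealInnerProductSpace

/-!
The `n` vectors of a simplex equiangular tight frame sum to zero, so the unhinged loss collapses
to `-((1 + γ) * ⟪w y, h⟫)` and a loss below the threshold means that `⟪w y, h⟫` exceeds `t * ‖h‖`,
where `t = √((n - 2) / (2 * (n - 1)))`. This `t` is the length of the midpoint of any two frame
vectors, so by Cauchy–Schwarz the average of `⟪w y, h⟫` and `⟪w i, h⟫` is at most `t * ‖h‖`; the
first of the two being larger than that, the second is smaller.
-/

variable {ι E : Type*} [Fintype ι] [NormedAddCommGroup E] [InnerProductSpace ℝ E]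

theorem inner_lt_inner_of_norm_add_mul_norm_lt {u v h : E} (huv : ‖u + v‖ * ‖h‖ < 2 * ⟪u, h⟫) :
    ⟪v, h⟫ < ⟪u, h⟫ := by
  have hcs : ⟪u, h⟫ + ⟪v, h⟫ ≤ ‖u + v‖ * ‖h‖ :=
    inner_add_left (𝕜 := ℝ) u v h ▸ real_inner_le_norm (u + v) h
  linarith

/-- The bias-free unhinged loss of the feature `h` with label `y`, for the class prototypes `w`
and the parameter `γ`. -/
def unhingedLoss [DecidableEq ι] (γ : ℝ) (w : ι → E) (h : E) (y : ι) : ℝ :=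
  -⟪w y, h⟫ + γ * ∑ j ∈ Finset.univ.erase y, ⟪w j, h⟫

theorem unhingedLoss_eq_inner_sum_sub [DecidableEq ι] (γ : ℝ) (w : ι → E) (h : E) (y : ι) :
    unhingedLoss γ w h y = γ * ⟪∑ j, w j, h⟫ - (1 + γ) * ⟪w y, h⟫ := by
  rw [unhingedLoss, sum_inner, ← Finset.add_sum_erase _ (fun j ↦ ⟪w j, h⟫) (Finset.mem_univ y)]
  ring

/-- A simplex equiangular tight frame, the configuration of class prototypes under which the loss
threshold is derived; it is normalized to consist of unit vectors. -/
structure IsSimplexETF (w : ι → E) : Prop where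
  norm_eq_one (i : ι) : ‖w i‖ = 1
  inner_eq : Pairwise fun i j ↦ ⟪w i, w j⟫ = -1 / ((Fintype.card ι : ℝ) - 1)

namespace IsSimplexETF

variable {w : ι → E}

theorem sum_eq_zero [Nontrivial ι] (hw : IsSimplexETF w) : ∑ i, w i = 0 := by
  classical
  have hcard : (Fintype.card ι : ℝ) - 1 ≠ 0 :=
    sub_ne_zero.2 (Nat.one_lt_cast.2 Fintype.one_lt_card).ne'
  have inner_sum_eq_zero (i : ι) : ⟪w i, ∑ j, w j⟫ = 0 := calc
    ⟪w i, ∑ j, w j⟫ = ⟪w i, w i⟫ + ∑ j ∈ Finset.univ.erase i, ⟪w i, w j⟫ := by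
      rw [inner_sum, Finset.add_sum_erase _ (fun j ↦ ⟪w i, w j⟫) (Finset.mem_univ i)]
    _ = 1 + ((Fintype.card ι : ℝ) - 1) * (-1 / ((Fintype.card ι : ℝ) - 1)) := by
      rw [real_inner_self_eq_norm_sq, hw.norm_eq_one, one_pow,
        Finset.sum_congr rfl fun j hj ↦ hw.inner_eq (Finset.ne_of_mem_erase hj).symm,
        Finset.sum_const, nsmul_eq_mul, Finset.cast_card_erase_of_mem (Finset.mem_univ i),
        Finset.card_univ]
    _ = 0 := by rw [mul_div_cancel₀ _ hcard, add_neg_cancel]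
  rw [← inner_self_eq_zero (𝕜 := ℝ), sum_inner]
  exact Finset.sum_eq_zero fun i _ ↦ inner_sum_eq_zero i

theorem unhingedLoss_eq [DecidableEq ι] [Nontrivial ι] (hw : IsSimplexETF w) (γ : ℝ) (h : E)
    (y : ι) : unhingedLoss γ w h y = -((1 + γ) * ⟪w y, h⟫) := by
  rw [unhingedLoss_eq_inner_sum_sub, hw.sum_eq_zero, inner_zero_left, mul_zero, zero_sub]

theorem norm_add_eq (hw : IsSimplexETF w) {i j : ι} (hij : i ≠ j) :
    ‖w i + w j‖ =
      2 * √(((Fintype.card ι : ℝ) - 2) / (2 * ((Fintype.card ι : ℝ) - 1))) := by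
  have hcard : (2 : ℝ) ≤ Fintype.card ι :=
    Nat.ofNat_le_cast.2 (Fintype.one_lt_card_iff.2 ⟨i, j, hij⟩)
  have hpos : 0 < (Fintype.card ι : ℝ) - 1 := by linarith
  have hratio : 0 ≤ ((Fintype.card ι : ℝ) - 2) / (2 * ((Fintype.card ι : ℝ) - 1)) :=
    div_nonneg (by linarith) (by linarith)
  rw [← sq_eq_sq₀ (norm_nonneg _) (by positivity), norm_add_sq_real, hw.norm_eq_one,
    hw.norm_eq_one, hw.inner_eq hij, mul_pow, Real.sq_sqrt hratio]
  field_simp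
  ring

end IsSimplexETF

theorem unhinged_loss_threshold_correct_classification_general [DecidableEq ι] {γ : ℝ}
    (hγ : -1 ≤ γ) {w : ι → E} (hw : IsSimplexETF w) {h : E} {y : ι}
    (hloss : unhingedLoss γ w h y <
      -((1 + γ) * (√(((Fintype.card ι : ℝ) - 2) / (2 * ((Fintype.card ι : ℝ) - 1))) * ‖h‖)))
    {i : ι} (hi : i ≠ y) : ⟪w i, h⟫ < ⟪w y, h⟫ := by
  have : Nontrivial ι := nontrivial_of_ne i y hi
  rw [hw.unhingedLoss_eq, neg_lt_neg_iff] at hloss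
  apply inner_lt_inner_of_norm_add_mul_norm_lt
  rw [hw.norm_add_eq hi.symm, mul_assoc]
  gcongr
  exact lt_of_mul_lt_mul_left hloss (by linarith)

/-- **Correct classification below the unhinged-loss threshold under a simplex ETF.**
If the unit-norm prototypes form a simplex ETF and the unhinged loss of a unit-norm
feature `h` with label `y` is below `−(1+γ)·√((C−2)/(2(C−1)))`, then `h` is correctly
classified by `argmax_c ⟪w_c, h⟫`. -/
theorem unhinged_loss_threshold_correct_classification
    (C p : ℕ) (hC : 2 ≤ C) (hp : 1 ≤ p)
    (γ : ℝ) (hγ : 0 < γ)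
    (w : Fin C → EuclideanSpace ℝ (Fin p))
    (hw : ∀ c, ‖w c‖ = 1)
    (hww : ∀ i j, i ≠ j → ⟪w i, w j⟫ = -1 / ((C : ℝ) - 1))
    (h : EuclideanSpace ℝ (Fin p)) (hh : ‖h‖ = 1)
    (y : Fin C)
    (hloss : -⟪w y, h⟫ + γ * ∑ j ∈ Finset.univ.erase y, ⟪w j, h⟫ <
      -((1 + γ) * Real.sqrt (((C : ℝ) - 2) / (2 * ((C : ℝ) - 1))))) :
    ∀ i, i ≠ y → ⟪w y, h⟫ > ⟪w i, h⟫ := by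
  have hETF : IsSimplexETF w := ⟨hw, fun i j hij ↦ by simpa using hww i j hij⟩
  exact fun i ↦ unhinged_loss_threshold_correct_classification_general (by linarith : -1 ≤ γ) hETF
    (by rwa [hh, mul_one, Fintype.card_fin])
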